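/- arXiv:1805.08901 — 5 statements merged into one kernel-verified Lean document; each statement's English description precedes it below -/
import Mathlib

section
/- Fix a real a > 0. For each integer n ≥ 3, let m = ⌈n/(log n)³⌉ and let (W_e), indexed by the two-element subsets e of {1,…,m}, be i.i.d. Bernoulli random variables with success probability min(1, a·log n/n). Let Δ_n be the event that for every i ∈ {1,…,m}, the sum Σ_{j ≤ m, j ≠ i} W_{{i,j}} is at most log n / log log n. Then P(Δ_n) → 1 as n → ∞. -/
open MeasureTheory ProbabilityTheory Filter

/-- `⌈n / (log n)³⌉`. -/
noncomputable def mParam (n : ℕ) : ℕ := ⌈(n : ℝ) / (Real.log n) ^ 3⌉₊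

/-- Index type for the two-element subsets of `Fin m`, encoded as ordered pairs. -/
def EdgeIdx (m : ℕ) : Type := {p : Fin m × Fin m // p.1 < p.2}

instance (m : ℕ) : Fintype (EdgeIdx m) := by unfold EdgeIdx; infer_instance

/-- The degree of vertex `i`: the sum of `W` over the two-element subsets containing `i`. -/
noncomputable def degSum {m : ℕ} {Ω : Type*} (W : EdgeIdx m → Ω → ℝ) (i : Fin m) (ω : Ω) : ℝ :=
  ∑ e ∈ Finset.univ.filter (fun e : EdgeIdx m => e.1.1 = i ∨ e.1.2 = i), W e ω


lemma bern_ae {Ω : Type*} [MeasurableSpace Ω] (μ : Measure Ω) [IsProbabilityMeasure μ]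
    (X : Ω → ℝ) (hX : Measurable X) (p : ℝ) (hp1 : p ≤ 1)
    (h1 : μ {ω | X ω = 1} = ENNReal.ofReal p) (h0 : μ {ω | X ω = 0} = 1 - ENNReal.ofReal p) :
    ∀ᵐ ω ∂μ, X ω = 1 ∨ X ω = 0 := by
  have m1 : MeasurableSet {ω | X ω = 1} := hX (measurableSet_singleton 1)
  have m0 : MeasurableSet {ω | X ω = 0} := hX (measurableSet_singleton 0)
  have hd : Disjoint {ω | X ω = 1} {ω | X ω = 0} := by
    rw [Set.disjoint_left]
    intro ω h h'
    simp only [Set.mem_ofPred_eq] at h h'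
    linarith
  have hu : μ ({ω | X ω = 1} ∪ {ω | X ω = 0}) = 1 := by
    rw [measure_union hd m0, h1, h0]
    apply add_tsub_cancel_of_le
    exact ENNReal.ofReal_le_one.2 hp1
  have := (prob_compl_eq_zero_iff (m1.union m0)).2 hu
  exact this

lemma bern_mgf {Ω : Type*} [MeasurableSpace Ω] (μ : Measure Ω) [IsProbabilityMeasure μ]
    (X : Ω → ℝ) (hX : Measurable X) (p : ℝ) (hp0 : 0 ≤ p) (hp1 : p ≤ 1)
    (h1 : μ {ω | X ω = 1} = ENNReal.ofReal p) (h0 : μ {ω | X ω = 0} = 1 - ENNReal.ofReal p)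
    (t : ℝ) : Integrable (fun ω => Real.exp (t * X ω)) μ ∧
      mgf X μ t ≤ Real.exp (p * (Real.exp t - 1)) := by
  have m1 : MeasurableSet {ω | X ω = 1} := hX (measurableSet_singleton 1)
  have hae : (fun ω => Real.exp (t * X ω)) =ᵐ[μ]
      (fun ω => 1 + ({ω | X ω = 1}.indicator (fun _ => Real.exp t - 1) ω)) := by
    filter_upwards [bern_ae μ X hX p hp1 h1 h0] with ω h
    rcases h with h | h <;> simp [Set.indicator, h]
  have hi : Integrable ({ω | X ω = 1}.indicator (fun _ => Real.exp t - 1)) μ :=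
    (integrable_const _).indicator m1
  refine ⟨((integrable_const (1 : ℝ)).add hi).congr hae.symm, ?_⟩
  unfold mgf
  rw [integral_congr_ae hae, integral_add (integrable_const _) hi, integral_indicator_const _ m1]
  have : μ.real {ω | X ω = 1} = p := by
    rw [Measure.real, h1, ENNReal.toReal_ofReal hp0]
  rw [this]
  simp
  have := Real.add_one_le_exp (p * (Real.exp t - 1))
  linarith

lemma chern {ι : Type*} [Fintype ι] {Ω : Type*} [MeasurableSpace Ω] (μ : Measure Ω)
    [IsProbabilityMeasure μ]
    (X : ι → Ω → ℝ) (hX : ∀ e, Measurable (X e)) (hind : iIndepFun X μ)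
    (p : ℝ) (hp0 : 0 ≤ p) (hp1 : p ≤ 1)
    (hb : ∀ e, μ {ω | X e ω = 1} = ENNReal.ofReal p ∧ μ {ω | X e ω = 0} = 1 - ENNReal.ofReal p)
    (s : Finset ι) (t K : ℝ) (ht : 0 ≤ t) :
    μ.real {ω | K ≤ ∑ e ∈ s, X e ω} ≤
      Real.exp (-t * K + s.card * (p * (Real.exp t - 1))) := by
  have hm := fun e => bern_mgf μ (X e) (hX e) p hp0 hp1 (hb e).1 (hb e).2 t
  have hint := hind.integrable_exp_mul_sum hX (s := s) (t := t) (fun e _ => (hm e).1)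
  have := measure_ge_le_exp_mul_mgf K ht hint
  simp only [Finset.sum_apply] at this
  refine this.trans ?_
  rw [hind.mgf_sum hX, Real.exp_add]
  gcongr
  rw [← nsmul_eq_mul, Real.exp_nsmul]
  calc ∏ i ∈ s, mgf (X i) μ t ≤ ∏ _i ∈ s, Real.exp (p * (Real.exp t - 1)) :=
        Finset.prod_le_prod (fun _ _ => mgf_nonneg) (fun e _ => (hm e).2)
    _ = _ := by rw [Finset.prod_const]

lemma deg_card (m : ℕ) (i : Fin m) :
    (Finset.univ.filter (fun e : EdgeIdx m => e.1.1 = i ∨ e.1.2 = i)).card ≤ m := by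
  have := Finset.card_le_card_of_injOn (s := Finset.univ.filter (fun e : EdgeIdx m => e.1.1 = i ∨ e.1.2 = i))
    (t := (Finset.univ : Finset (Fin m))) (fun e => if e.1.1 = i then e.1.2 else e.1.1)
    (fun _ _ => Finset.mem_coe.2 (Finset.mem_univ _)) ?_
  · simpa using this
  · rintro ⟨⟨x, y⟩, h⟩ he ⟨⟨x', y'⟩, h'⟩ he' hh
    simp at he he' hh h h'
    apply Subtype.ext
    apply Prod.ext
    all_goals
      simp only
      grind

theorem max_degree_bound_whp
    (a : ℝ) (ha : 0 < a)
    (Ω : ℕ → Type*) (mΩ : ∀ n, MeasurableSpace (Ω n))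
    (P : ∀ n, Measure (Ω n)) (hP : ∀ n, IsProbabilityMeasure (P n))
    (W : ∀ n, EdgeIdx (mParam n) → Ω n → ℝ)
    (hmeas : ∀ n e, Measurable (W n e))
    (hindep : ∀ n, 3 ≤ n → iIndepFun (W n) (P n))
    (hbern : ∀ n, 3 ≤ n → ∀ e,
      P n {ω | W n e ω = 1} = ENNReal.ofReal (min 1 (a * Real.log n / n)) ∧
      P n {ω | W n e ω = 0} = 1 - ENNReal.ofReal (min 1 (a * Real.log n / n))) :
    Tendsto (fun n => (P n {ω | ∀ i : Fin (mParam n),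
        degSum (W n) i ω ≤ Real.log n / Real.log (Real.log n)}).toReal)
      atTop (nhds 1) := by
  have hlog : Tendsto (fun n : ℕ => Real.log n) atTop atTop :=
    Real.tendsto_log_atTop.comp tendsto_natCast_atTop_atTop
  have hL3 : ∀ᶠ n : ℕ in atTop, Real.log n ^ 3 ≤ n := by
    have h := (isLittleO_log_rpow_atTop (r := 1/3) (by norm_num)).bound (c := 1) one_pos
    filter_upwards [tendsto_natCast_atTop_atTop.eventually h,
      hlog.eventually_ge_atTop 0] with n hn h0
    have hn0 : (0:ℝ) ≤ n := n.cast_nonneg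
    rw [Real.norm_of_nonneg h0, Real.norm_of_nonneg (by positivity), one_mul] at hn
    calc Real.log n ^ 3 ≤ ((n:ℝ) ^ (1/3 : ℝ)) ^ 3 := by gcongr
      _ = (n:ℝ) := by
        rw [← Real.rpow_natCast, ← Real.rpow_mul hn0]; norm_num
  have key : ∀ᶠ n : ℕ in atTop, 1 - Real.exp (2 * a) / n ≤ (P n {ω | ∀ i : Fin (mParam n),
        degSum (W n) i ω ≤ Real.log n / Real.log (Real.log n)}).toReal := by
    filter_upwards [hL3, hlog.eventually_ge_atTop (Real.exp 1), eventually_ge_atTop 3]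
      with n hn3 hL hn
    have := hP n
    have hn0 : (0:ℝ) < n := by positivity
    set L := Real.log n with hLdef
    have hL1 : 1 ≤ L := by linarith [Real.add_one_le_exp (1:ℝ)]
    have hL0 : 0 < L := by linarith
    have hll : 1 ≤ Real.log L := (Real.le_log_iff_exp_le hL0).2 hL
    set m := mParam n with hm
    have hmn : (m:ℝ) ≤ n := by
      have : m ≤ n := by
        rw [hm, mParam, Nat.ceil_le]
        exact div_le_self hn0.le (one_le_pow₀ hL1)
      exact_mod_cast this
    have hm2 : (m:ℝ) * L ^ 3 ≤ 2 * n := by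
      have : (m:ℝ) < n / L ^ 3 + 1 := Nat.ceil_lt_add_one (by positivity)
      have h2 : (m:ℝ) * L ^ 3 ≤ (n / L ^ 3 + 1) * L ^ 3 := by gcongr
      have h3 : (n / L ^ 3 + 1) * L ^ 3 = n + L ^ 3 := by field_simp
      linarith
    set p := min 1 (a * L / n) with hp
    have hp0 : 0 ≤ p := by positivity
    have hp1 : p ≤ 1 := min_le_left _ _
    have hpn : p ≤ a * L / n := min_le_right _ _
    set K := L / Real.log L with hK
    have hexpt : Real.exp (2 * Real.log L) = L ^ 2 := by
      rw [mul_comm, Real.exp_mul, Real.exp_log hL0]; norm_cast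
    have hbd : ∀ i : Fin m, (P n).real {ω | K ≤ degSum (W n) i ω} ≤
        Real.exp (2 * a) / n ^ 2 := by
      intro i
      have h := chern (P n) (W n) (hmeas n) (hindep n hn) p hp0 hp1 (hbern n hn)
        (Finset.univ.filter (fun e : EdgeIdx m => e.1.1 = i ∨ e.1.2 = i))
        (2 * Real.log L) K (by positivity)
      refine h.trans ?_
      have hc : (((Finset.univ.filter
        (fun e : EdgeIdx m => e.1.1 = i ∨ e.1.2 = i)).card : ℕ) : ℝ) ≤ m := by
        exact_mod_cast deg_card m i
      set c : ℝ := (((Finset.univ.filter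
        (fun e : EdgeIdx m => e.1.1 = i ∨ e.1.2 = i)).card : ℕ) : ℝ)
      rw [hexpt]
      have e1 : -(2 * Real.log L) * K = -(2 * L) := by
        rw [hK]; field_simp
      have e2 : c * (p * (L ^ 2 - 1)) ≤ 2 * a := by
        calc c * (p * (L ^ 2 - 1)) ≤ m * ((a * L / n) * L ^ 2) := by
              have : 0 ≤ L ^ 2 - 1 := by nlinarith
              gcongr
              linarith
          _ = a * (m * L ^ 3) / n := by ring
          _ ≤ a * (2 * n) / n := by gcongr
          _ = 2 * a := by field_simp
      have e3 : Real.exp (2 * a) / n ^ 2 = Real.exp (-(2 * L) + 2 * a) := by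
        have e4 : Real.exp (2 * L) = (n:ℝ) ^ 2 := by
          rw [mul_comm, Real.exp_mul, hLdef, Real.exp_log hn0]; norm_cast
        rw [Real.exp_add, Real.exp_neg, e4]
        field_simp
      rw [e1, e3]
      gcongr
    have hbad : (P n).real (⋃ i : Fin m, {ω | K ≤ degSum (W n) i ω}) ≤ Real.exp (2 * a) / n := by
      refine (measureReal_iUnion_fintype_le _).trans ?_
      refine (Finset.sum_le_sum fun i _ => hbd i).trans ?_
      simp only [Finset.sum_const, Finset.card_univ, Fintype.card_fin, nsmul_eq_mul]
      calc (m:ℝ) * (Real.exp (2 * a) / n ^ 2) ≤ n * (Real.exp (2 * a) / n ^ 2) := by gcongr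
        _ = _ := by field_simp
    have hmd : ∀ i : Fin m, Measurable (degSum (W n) i) := fun i => by
      unfold degSum
      exact Finset.measurable_fun_sum _ fun e _ => hmeas n e
    have hms : MeasurableSet (⋃ i : Fin m, {ω | K ≤ degSum (W n) i ω}) :=
      MeasurableSet.iUnion fun i => measurableSet_le measurable_const (hmd i)
    have hcompl := probReal_compl_eq_one_sub (μ := P n) hms
    have hsub : (P n).real (⋃ i : Fin m, {ω | K ≤ degSum (W n) i ω})ᶜ ≤
        (P n).real {ω | ∀ i : Fin m, degSum (W n) i ω ≤ K} := by
      refine measureReal_mono ?_ (measure_ne_top _ _)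
      intro ω hω i
      simp only [Set.mem_compl_iff, Set.mem_iUnion, Set.mem_ofPred_eq, not_exists, not_le] at hω
      exact (hω i).le
    change _ ≤ (P n).real {ω | ∀ i : Fin m, degSum (W n) i ω ≤ K}
    linarith
  have hlim : Tendsto (fun n : ℕ => 1 - Real.exp (2 * a) / n) atTop (nhds 1) := by
    simpa using (tendsto_const_div_atTop_nhds_zero_nat (Real.exp (2 * a))).const_sub 1
  refine tendsto_of_tendsto_of_tendsto_of_le_of_le' hlim tendsto_const_nhds key ?_
  filter_upwards with n
  have := hP n
  exact measureReal_le_one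
end

section
/- Let X₁, …, X_n be i.i.d. real-valued random variables with common law that of X, and let t ∈ ℝ be such that M := E[e^{tX}] is finite, E[|X|·e^{tX}] is finite, and E[X²·e^{tX}] is finite. Set Γ = log M, a = E[X·e^{tX}]/M, and σ̂² = E[X²·e^{tX}]/M − a². Then for every ε > 0, P( (1/n)·Σ_{i=1}^n X_i ≥ a − ε ) ≥ e^{−n·(t·a − Γ + |t|·ε)} · (1 − σ̂²/(n·ε²)). -/
open MeasureTheory ProbabilityTheory

theorem tilted_lower_bound
    {Ω : Type*} [MeasurableSpace Ω] (P : Measure Ω) [IsProbabilityMeasure P]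
    (μ : Measure ℝ) [IsProbabilityMeasure μ]
    (n : ℕ) (hn : 0 < n)
    (X : Fin n → Ω → ℝ) (hmeas : ∀ i, Measurable (X i))
    (hindep : iIndepFun X P)
    (hlaw : ∀ i, Measure.map (X i) P = μ)
    (t : ℝ)
    (hM : Integrable (fun x => Real.exp (t * x)) μ)
    (hM1 : Integrable (fun x => |x| * Real.exp (t * x)) μ)
    (hM2 : Integrable (fun x => x ^ 2 * Real.exp (t * x)) μ)
    (ε : ℝ) (hε : 0 < ε) :
    let M : ℝ := ∫ x, Real.exp (t * x) ∂μ
    let Γ : ℝ := Real.log M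
    let a : ℝ := (∫ x, x * Real.exp (t * x) ∂μ) / M
    let σ2 : ℝ := (∫ x, x ^ 2 * Real.exp (t * x) ∂μ) / M - a ^ 2
    Real.exp (-(n : ℝ) * (t * a - Γ + |t| * ε)) * (1 - σ2 / ((n : ℝ) * ε ^ 2))
      ≤ (P {ω | a - ε ≤ (1 / (n : ℝ)) * ∑ i, X i ω}).toReal := by
  intro M Γ a σ2
  have hMpos : 0 < M := integral_exp_pos hM
  have hnR : (0 : ℝ) < n := by exact_mod_cast hn
  have hm1 : Integrable (fun x => x * Real.exp (t * x)) μ := by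
    refine hM1.mono (by fun_prop) (Filter.Eventually.of_forall fun x => ?_)
    simp
  have hc1 : Integrable (fun x => Real.exp (t * x) * (x - a)) μ := by
    refine (hm1.sub (hM.const_mul a)).congr (Filter.Eventually.of_forall fun x => ?_)
    simp only [Pi.sub_apply]; ring
  have hc2 : Integrable (fun x => Real.exp (t * x) * (x - a) * (x - a)) μ := by
    refine ((hM2.sub (hm1.const_mul (2 * a))).add (hM.const_mul (a ^ 2))).congr
      (Filter.Eventually.of_forall fun x => ?_)
    simp only [Pi.sub_apply, Pi.add_apply]; ring
  have ha : ∫ x, x * Real.exp (t * x) ∂μ = a * M := by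
    exact (div_mul_cancel₀ _ hMpos.ne').symm
  have hs : ∫ x, x ^ 2 * Real.exp (t * x) ∂μ = (σ2 + a ^ 2) * M := by
    simp only [σ2]; rw [sub_add_cancel, div_mul_cancel₀ _ hMpos.ne']
  have hi1 : ∫ x, Real.exp (t * x) * (x - a) ∂μ = 0 := by
    have : (fun x => Real.exp (t * x) * (x - a))
        = fun x => x * Real.exp (t * x) - a * Real.exp (t * x) := by ext x; ring
    rw [this, integral_sub hm1 (hM.const_mul a), integral_const_mul, ha]
    exact sub_self _
  have hi2 : ∫ x, Real.exp (t * x) * (x - a) * (x - a) ∂μ = σ2 * M := by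
    have : (fun x => Real.exp (t * x) * (x - a) * (x - a))
        = fun x => (x ^ 2 * Real.exp (t * x) - (2 * a) * (x * Real.exp (t * x)))
          + a ^ 2 * Real.exp (t * x) := by ext x; ring
    have h21 : Integrable (fun x => x ^ 2 * Real.exp (t * x)
        - (2 * a) * (x * Real.exp (t * x))) μ := hM2.sub (hm1.const_mul (2 * a))
    rw [this, integral_add h21 (hM.const_mul _),
      integral_sub hM2 (hm1.const_mul _), integral_const_mul, integral_const_mul, ha, hs]
    change _ + a ^ 2 * M = _
    ring
  -- the weighted factors
  let g : Fin n → Fin n → Fin n → ℝ → ℝ := fun i j k x =>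
    Real.exp (t * x) * (if k = i then x - a else 1) * (if k = j then x - a else 1)
  have hg : ∀ i j k, Integrable (g i j k) μ := by
    intro i j k
    by_cases h1 : k = i <;> by_cases h2 : k = j <;> simp only [g, h1, h2, if_true, if_false, mul_one]
    all_goals (try split_ifs) <;> (try simp only [mul_one]) <;> first | exact hc2 | exact hc1 | exact hM
  let Q : Measure (Fin n → ℝ) := Measure.pi fun _ => μ
  have hmapQ : Measure.map (fun ω i => X i ω) P = Q := by
    rw [(iIndepFun_iff_map_fun_eq_pi_map fun i => (hmeas i).aemeasurable).1 hindep]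
    simp [Q, hlaw]
  have hgprod : ∀ i j, Integrable (fun x : Fin n → ℝ => ∏ k, g i j k (x k)) Q :=
    fun i j => Integrable.fintype_prod (fun k => hg i j k)
  have hgint : ∀ i j, ∫ x : Fin n → ℝ, ∏ k, g i j k (x k) ∂Q
      = if i = j then σ2 * M ^ n else 0 := by
    intro i j
    rw [integral_fintype_prod_eq_prod]
    split_ifs with h
    · subst h
      rw [← Finset.mul_prod_erase Finset.univ _ (Finset.mem_univ i)]
      have h1 : ∫ x, g i i i x ∂μ = σ2 * M := by simpa [g] using hi2
      have h2 : ∀ k ∈ Finset.univ.erase i, ∫ x, g i i k x ∂μ = M := by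
        intro k hk
        have := Finset.ne_of_mem_erase hk
        simp [g, this, M]
      rw [h1, Finset.prod_congr rfl h2, Finset.prod_const, Finset.card_erase_of_mem (Finset.mem_univ i),
        Finset.card_univ, Fintype.card_fin, mul_assoc, ← pow_succ', Nat.sub_add_cancel hn]
    · apply Finset.prod_eq_zero (Finset.mem_univ i)
      simpa [g, h] using hi1
  have hW : Integrable (fun x : Fin n → ℝ => ∏ k, Real.exp (t * x k)) Q :=
    Integrable.fintype_prod (fun _ => hM)
  have hWi : ∫ x : Fin n → ℝ, ∏ k, Real.exp (t * x k) ∂Q = M ^ n := by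
    rw [integral_fintype_prod_eq_prod (fun _ x => Real.exp (t * x))]
    simp [M]
  have hgexp : ∀ x : Fin n → ℝ, ∑ i, ∑ j, ∏ k, g i j k (x k)
      = (∏ k, Real.exp (t * x k)) * (∑ i, (x i - a)) ^ 2 := by
    intro x
    simp only [g, Finset.prod_mul_distrib, Finset.prod_ite_eq', Finset.mem_univ, if_true]
    rw [sq, Finset.sum_mul_sum, Finset.mul_sum]
    simp only [Finset.mul_sum, mul_assoc]
  have hS : Integrable (fun x : Fin n → ℝ => ∑ i, ∑ j, ∏ k, g i j k (x k)) Q :=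
    integrable_finsetSum _ fun i _ => integrable_finsetSum _ fun j _ => hgprod i j
  have hSi : ∫ x : Fin n → ℝ, ∑ i, ∑ j, ∏ k, g i j k (x k) ∂Q = n * (σ2 * M ^ n) := by
    rw [integral_finsetSum _ fun i _ => integrable_finsetSum _ fun j _ => hgprod i j]
    simp_rw [integral_finsetSum _ fun j _ => hgprod _ j, hgint]
    simp
  let A : Set (Fin n → ℝ) := {x | a - ε ≤ (1 / (n : ℝ)) * ∑ i, x i}
  have hA : MeasurableSet A := measurableSet_le (by fun_prop) (by fun_prop)
  have hPA : P {ω | a - ε ≤ (1 / (n : ℝ)) * ∑ i, X i ω} = Q A := by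
    rw [← hmapQ, Measure.map_apply (measurable_pi_lambda _ hmeas) hA]
    rfl
  rw [hPA]
  change _ ≤ Q.real A
  rw [← integral_indicator_one hA]
  let c : ℝ := Real.exp (-(n * (t * a + |t| * ε)))
  have key : ∀ x : Fin n → ℝ, c * ((∏ k, Real.exp (t * x k))
      - (∑ i, ∑ j, ∏ k, g i j k (x k)) / (n * ε) ^ 2) ≤ A.indicator 1 x := by
    intro x
    rw [hgexp]
    have hsum : ∑ i, (x i - a) = ∑ i, x i - n * a := by simp
    rw [hsum, ← Real.exp_sum, ← Finset.mul_sum]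
    set s := ∑ i, x i with hsdef
    have hne : 0 < n * ε := by positivity
    have hfac : c * (Real.exp (t * s) - Real.exp (t * s) * (s - n * a) ^ 2 / (n * ε) ^ 2)
        = c * Real.exp (t * s) * (1 - (s - n * a) ^ 2 / (n * ε) ^ 2) := by ring
    rw [hfac]
    have hpos : 0 < c * Real.exp (t * s) := by positivity
    by_cases hx : |s - n * a| ≤ n * ε
    · have hxA : x ∈ A := by
        change a - ε ≤ 1 / (n : ℝ) * s
        rw [one_div, ← div_eq_inv_mul, le_div_iff₀ hnR]
        nlinarith [(abs_le.1 hx).1]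
      rw [Set.indicator_of_mem hxA]
      have h1 : c * Real.exp (t * s) ≤ 1 := by
        rw [← Real.exp_add, Real.exp_le_one_iff]
        have : t * (s - n * a) ≤ |t| * (n * ε) :=
          (le_abs_self _).trans (by rw [abs_mul]; gcongr)
        linarith
      have h2 : 0 ≤ (s - n * a) ^ 2 / (n * ε) ^ 2 := by positivity
      simp only [Pi.one_apply]
      nlinarith
    · push Not at hx
      have h2 : 1 ≤ (s - n * a) ^ 2 / (n * ε) ^ 2 := by
        rw [le_div_iff₀ (by positivity), one_mul, ← sq_abs (s - n * a)]
        gcongr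
      have h3 : (0 : ℝ) ≤ A.indicator 1 x := Set.indicator_nonneg (fun _ _ => zero_le_one) x
      nlinarith
  have hfin := integral_mono ((hW.sub (hS.div_const ((n * ε) ^ 2))).const_mul c)
    ((integrable_const (1 : ℝ)).indicator hA) key
  refine le_trans (le_of_eq ?_) hfin
  simp only [Pi.sub_apply]
  rw [integral_const_mul, integral_sub hW (hS.div_const _), integral_div, hWi, hSi]
  have hMn : M ^ n = Real.exp (n * Γ) := by
    rw [Real.exp_nat_mul, Real.exp_log hMpos]
  have : Real.exp (-(n : ℝ) * (t * a - Γ + |t| * ε)) = c * M ^ n := by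
    rw [hMn, ← Real.exp_add]; congr 1; ring
  rw [this]
  field_simp
end

section
/- Let μ be a probability measure on ℝ and t ∈ ℝ such that M := ∫ e^{tx} dμ(x) is finite, and let μ_t be the exponentially tilted measure with density x ↦ e^{tx}/M with respect to μ. Let X₁, …, X_n be i.i.d. with law μ and X̂₁, …, X̂_n be i.i.d. with law μ_t. Then for every a ∈ ℝ and every ε > 0, P( a − ε ≤ (1/n)·Σ_{i=1}^n X_i ≤ a + ε ) ≥ e^{−n·(t·a − log M + |t|·ε)} · P( a − ε ≤ (1/n)·Σ_{i=1}^n X̂_i ≤ a + ε ). -/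
open MeasureTheory ProbabilityTheory

/-- Joint law of i.i.d. variables with density `f` wrt `μ`, as a push-forward of a tilted `P`. -/
lemma pi_withDensity_eq_map {Ω : Type*} [MeasurableSpace Ω] (P : Measure Ω)
    (μ ν : Measure ℝ) [IsProbabilityMeasure ν] (n : ℕ) (X : Fin n → Ω → ℝ)
    (hmX : ∀ i, Measurable (X i)) (hX : iIndepFun X P) (hlaw : ∀ i, Measure.map (X i) P = μ)
    (f : ℝ → ENNReal) (hf : Measurable f) (hν : ν = μ.withDensity f) :
    Measure.pi (fun _ : Fin n => ν)
      = Measure.map (fun ω i => X i ω) (P.withDensity (fun ω => ∏ i, f (X i ω))) := by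
  classical
  have hm : Measurable (fun ω i => X i ω) := measurable_pi_lambda _ hmX
  refine Measure.pi_eq fun s hs => ?_
  have hpre : MeasurableSet ((fun ω i => X i ω) ⁻¹' (Set.univ.pi s)) :=
    hm (MeasurableSet.univ_pi hs)
  rw [Measure.map_apply hm (MeasurableSet.univ_pi hs), withDensity_apply _ hpre,
    ← lintegral_indicator hpre]
  have hg : ∀ i, Measurable ((s i).indicator f) := fun i => hf.indicator (hs i)
  have h1 := lintegral_prod_eq_prod_lintegral_of_indepFun Finset.univ
    (fun i ω => (s i).indicator f (X i ω)) (hX.comp _ hg) (fun i => (hg i).comp (hmX i))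
  have h2 : ∀ i, ∫⁻ ω, (s i).indicator f (X i ω) ∂P = ν (s i) := by
    intro i
    rw [← lintegral_map (hg i) (hmX i), hlaw i, hν, withDensity_apply _ (hs i),
      lintegral_indicator (hs i)]
  simp only [h2] at h1
  rw [← h1]
  refine lintegral_congr fun ω => ?_
  by_cases h : ω ∈ (fun ω i => X i ω) ⁻¹' (Set.univ.pi s)
  · rw [Set.indicator_of_mem h]
    refine Finset.prod_congr rfl fun i _ => ?_
    rw [Set.indicator_of_mem (h i trivial)]
  · rw [Set.indicator_of_notMem h]
    simp only [Set.mem_preimage, Set.mem_pi, not_forall] at h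
    obtain ⟨i, _, hi⟩ := h
    exact (Finset.prod_eq_zero (Finset.mem_univ i) (Set.indicator_of_notMem hi f)).symm

theorem change_of_measure_tilting
    {Ω₁ Ω₂ : Type*} [MeasurableSpace Ω₁] [MeasurableSpace Ω₂]
    (P : Measure Ω₁) [IsProbabilityMeasure P]
    (Q : Measure Ω₂) [IsProbabilityMeasure Q]
    (μ : Measure ℝ) [IsProbabilityMeasure μ]
    (t : ℝ)
    (hM : Integrable (fun x => Real.exp (t * x)) μ)
    (n : ℕ) (hn : 0 < n)
    (X : Fin n → Ω₁ → ℝ) (Xhat : Fin n → Ω₂ → ℝ)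
    (hmX : ∀ i, Measurable (X i)) (hmXhat : ∀ i, Measurable (Xhat i))
    (hXindep : iIndepFun X P)
    (hXhatindep : iIndepFun Xhat Q)
    (hlawX : ∀ i, Measure.map (X i) P = μ)
    (hlawXhat : ∀ i, Measure.map (Xhat i) Q =
      μ.withDensity (fun x =>
        ENNReal.ofReal (Real.exp (t * x) / ∫ y, Real.exp (t * y) ∂μ)))
    (a ε : ℝ) (hε : 0 < ε) :
    Real.exp (-(n : ℝ) * (t * a - Real.log (∫ y, Real.exp (t * y) ∂μ) + |t| * ε))
        * (Q {ω | a - ε ≤ (1 / (n : ℝ)) * ∑ i, Xhat i ω ∧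
                  (1 / (n : ℝ)) * ∑ i, Xhat i ω ≤ a + ε}).toReal
      ≤ (P {ω | a - ε ≤ (1 / (n : ℝ)) * ∑ i, X i ω ∧
                (1 / (n : ℝ)) * ∑ i, X i ω ≤ a + ε}).toReal := by
  set M := ∫ y, Real.exp (t * y) ∂μ with hMdef
  have hMpos : 0 < M := integral_exp_pos hM
  set f : ℝ → ENNReal := fun x => ENNReal.ofReal (Real.exp (t * x) / M) with hf
  have hfm : Measurable f := by fun_prop
  set ν := μ.withDensity f with hν
  have : IsProbabilityMeasure ν := by
    rw [← hlawXhat ⟨0, hn⟩]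
    exact Measure.isProbabilityMeasure_map (hmXhat _).aemeasurable
  have hpi := pi_withDensity_eq_map P μ ν n X hmX hXindep hlawX f hfm hν
  have hQ := hXhatindep.map_fun_eq_pi_map (fun i => (hmXhat i).aemeasurable)
  simp only [hlawXhat] at hQ
  rw [hpi] at hQ
  have hm : Measurable (fun ω i => X i ω) := measurable_pi_lambda _ hmX
  have hm' : Measurable (fun ω i => Xhat i ω) := measurable_pi_lambda _ hmXhat
  set A : Set (Fin n → ℝ) := {x | a - ε ≤ (1 / (n : ℝ)) * ∑ i, x i ∧
    (1 / (n : ℝ)) * ∑ i, x i ≤ a + ε} with hA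
  have hAm : MeasurableSet A := by
    have hg : Measurable (fun x : Fin n → ℝ => (1 / (n : ℝ)) * ∑ i, x i) := by fun_prop
    exact (measurableSet_le measurable_const hg).inter (measurableSet_le hg measurable_const)
  have hQA := DFunLike.congr_fun hQ A
  rw [Measure.map_apply hm' hAm, Measure.map_apply hm hAm, withDensity_apply _ (hm hAm)] at hQA
  change _ * (Q ((fun ω i => Xhat i ω) ⁻¹' A)).toReal ≤ (P ((fun ω i => X i ω) ⁻¹' A)).toReal
  set c := (n : ℝ) * (t * a - Real.log M + |t| * ε) with hc
  have hn' : (0 : ℝ) < n := by exact_mod_cast hn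
  have hbound : Q ((fun ω i => Xhat i ω) ⁻¹' A)
      ≤ ENNReal.ofReal (Real.exp c) * P ((fun ω i => X i ω) ⁻¹' A) := by
    rw [hQA, ← setLIntegral_const]
    refine setLIntegral_mono measurable_const fun ω hω => ?_
    simp only [hf]
    rw [← ENNReal.ofReal_prod_of_nonneg (fun i _ => by positivity)]
    apply ENNReal.ofReal_le_ofReal
    have h1 : ∀ x, Real.exp (t * x) / M = Real.exp (t * x - Real.log M) := by
      intro x
      rw [Real.exp_sub, Real.exp_log hMpos]
    simp only [h1]
    rw [← Real.exp_sum]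
    apply Real.exp_le_exp.mpr
    rw [Finset.sum_sub_distrib, ← Finset.mul_sum]
    simp only [Finset.sum_const, Finset.card_univ, Fintype.card_fin, nsmul_eq_mul]
    obtain ⟨hl, hu⟩ := hω
    set m := (1 / (n : ℝ)) * ∑ i, X i ω with hmm
    have hS : ∑ i, X i ω = n * m := by rw [hmm]; field_simp
    have habs : |m - a| ≤ ε := by
      rw [abs_le]; constructor
      · change a - ε ≤ m at hl
        linarith
      · change m ≤ a + ε at hu
        linarith
    have h3 : t * (m - a) ≤ |t| * ε :=
      (le_abs_self _).trans ((abs_mul _ _).le.trans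
        (mul_le_mul_of_nonneg_left habs (abs_nonneg t)))
    rw [hS, hc]
    have h4 := mul_le_mul_of_nonneg_left h3 hn'.le
    linarith
  have hreal := ENNReal.toReal_mono (by finiteness) hbound
  rw [ENNReal.toReal_mul, ENNReal.toReal_ofReal (Real.exp_pos _).le] at hreal
  have hneg : -(n : ℝ) * (t * a - Real.log M + |t| * ε) = -c := by rw [hc]; ring
  rw [hneg]
  calc _ ≤ Real.exp (-c) * (Real.exp c * (P ((fun ω i => X i ω) ⁻¹' A)).toReal) :=
        mul_le_mul_of_nonneg_left hreal (Real.exp_pos _).le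
    _ = _ := by rw [← mul_assoc, ← Real.exp_add]; simp
end

section
/- Fix reals a > b > 0. For each integer n ≥ 3, let Z₁, …, Z_{⌈n/2⌉} be i.i.d. Bernoulli with success probability min(1, b·log n/n) and W₁, …, W_{⌈n/2⌉} be i.i.d. Bernoulli with success probability min(1, a·log n/n), all mutually independent. Then for every ε > 0 there exists N such that for all n ≥ N, P( Σ_{k=1}^{⌈n/2⌉} Z_k − Σ_{k=1}^{⌈n/2⌉} W_k ≥ 1 + log n / log log n ) ≥ n^{−(√a−√b)²/2 − ε}. -/
open MeasureTheory ProbabilityTheory Filter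

/-- `⌈n/2⌉`. -/
noncomputable def half (n : ℕ) : ℕ := ⌈(n : ℝ) / 2⌉₊

open Topology in
lemma half_div_tendsto : Tendsto (fun n : ℕ => (half n : ℝ) / n) atTop (𝓝 (1/2)) := by
  have h := (tendsto_nat_ceil_mul_div_atTop (R := ℝ) (a := 1/2) (by norm_num)).comp
    (tendsto_natCast_atTop_atTop (R := ℝ))
  refine h.congr fun n => ?_
  simp only [Function.comp, half]
  rw [one_div_mul_eq_div]

lemma log_factorial_upper (k : ℕ) (hk : 1 ≤ k) :
    Real.log (k.factorial : ℝ) ≤ k * Real.log k - k + 1 + Real.log k / 2 := by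
  obtain ⟨j, rfl⟩ : ∃ j, k = j + 1 := ⟨k - 1, by omega⟩
  have h := Stirling.log_stirlingSeq'_antitone (Nat.zero_le j)
  simp only [Function.comp, Nat.succ_eq_add_one, zero_add] at h
  rw [Stirling.log_stirlingSeq_formula, Stirling.stirlingSeq_one,
    Real.log_div (Real.exp_pos 1).ne' (by positivity), Real.log_exp, Real.log_sqrt (by norm_num),
    Real.log_mul (by norm_num) (by positivity),
    Real.log_div (by positivity) (Real.exp_pos 1).ne', Real.log_exp] at h
  push_cast at h ⊢
  linarith

lemma log_pmf_lower (m k : ℕ) (p : ℝ) (hk : 1 ≤ k) (hkm : k < m) (hp : 0 < p) (hp1 : p < 1) :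
    (k : ℝ) * (Real.log (((m : ℝ) - k) * p / k) + 1) - m * p / (1 - p)
      - (1 + Real.log k / 2) ≤ Real.log ((m.choose k : ℝ) * (p ^ k * (1 - p) ^ (m - k))) := by
  have hmk : (0 : ℝ) < (m : ℝ) - k := by
    have : (k : ℝ) < m := by exact_mod_cast hkm
    linarith
  have hk0 : (0 : ℝ) < k := by exact_mod_cast hk
  have h1p : 0 < 1 - p := by linarith
  have hch : ((m : ℝ) - k) ^ k / (k.factorial : ℝ) ≤ (m.choose k : ℝ) := by
    rw [div_le_iff₀ (by positivity)]
    have h1 := Nat.pow_sub_le_descFactorial m k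
    rw [Nat.descFactorial_eq_factorial_mul_choose] at h1
    have h2 : ((m - k) ^ k : ℕ) ≤ (m + 1 - k) ^ k := Nat.pow_le_pow_left (by omega) k
    have h3 : (((m - k) ^ k : ℕ) : ℝ) ≤ ((k.factorial * m.choose k : ℕ) : ℝ) := by
      exact_mod_cast h2.trans h1
    push_cast [Nat.cast_sub hkm.le] at h3
    linarith
  have hpow : (1 - p) ^ m ≤ (1 - p) ^ (m - k) :=
    pow_le_pow_of_le_one h1p.le (by linarith) (Nat.sub_le _ _)
  have hle : ((m : ℝ) - k) ^ k / (k.factorial : ℝ) * (p ^ k * (1 - p) ^ m)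
      ≤ (m.choose k : ℝ) * (p ^ k * (1 - p) ^ (m - k)) := by gcongr
  refine le_trans ?_ (Real.log_le_log (by positivity) hle)
  have e1 : Real.log (((m : ℝ) - k) ^ k / (k.factorial : ℝ) * (p ^ k * (1 - p) ^ m))
      = k * Real.log ((m : ℝ) - k) - Real.log (k.factorial : ℝ)
        + (k * Real.log p + m * Real.log (1 - p)) := by
    rw [Real.log_mul (by positivity) (by positivity), Real.log_div (by positivity) (by positivity),
      Real.log_mul (by positivity) (by positivity), Real.log_pow, Real.log_pow, Real.log_pow]
  rw [e1, Real.log_div (by positivity) (by positivity),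
    Real.log_mul (by positivity) (by positivity)]
  have hf := log_factorial_upper k hk
  have hl := Real.one_sub_inv_le_log_of_pos h1p
  have hl2 : (m : ℝ) * (1 - (1 - p)⁻¹) ≤ m * Real.log (1 - p) := by gcongr
  have : (m : ℝ) * (1 - (1 - p)⁻¹) = - (m * p / (1 - p)) := by field_simp; ring
  nlinarith

open Topology in
lemma pmf_asymp (c κ : ℝ) (hc : 0 < c) (hκ : 0 < κ) (k : ℕ → ℕ)
    (hk : Tendsto (fun n : ℕ => (k n : ℝ) / Real.log n) atTop (𝓝 κ)) (ε : ℝ) (hε : 0 < ε) :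
    ∀ᶠ n : ℕ in atTop,
      (n : ℝ) ^ (κ * (Real.log (c / (2 * κ)) + 1) - c / 2 - ε) ≤
      ((half n).choose (k n) : ℝ) * ((min 1 (c * Real.log n / n)) ^ (k n)
        * (1 - min 1 (c * Real.log n / n)) ^ (half n - k n)) := by
  have hL : Tendsto (fun n : ℕ => Real.log (n : ℝ)) atTop atTop :=
    Real.tendsto_log_atTop.comp tendsto_natCast_atTop_atTop
  have hLn : Tendsto (fun n : ℕ => Real.log (n : ℝ) / n) atTop (𝓝 0) :=
    (Real.isLittleO_log_id_atTop.tendsto_div_nhds_zero).comp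
      (tendsto_natCast_atTop_atTop (R := ℝ))
  have hkt : Tendsto (fun n : ℕ => (k n : ℝ)) atTop atTop := by
    refine (hk.pos_mul_atTop hκ hL).congr' ?_
    filter_upwards [hL.eventually_gt_atTop 0] with n hn
    field_simp
  have hlk : Tendsto (fun n : ℕ => Real.log (k n : ℝ) / Real.log n) atTop (𝓝 0) := by
    have h1 := ((Real.isLittleO_log_id_atTop.tendsto_div_nhds_zero).comp hkt).mul hk
    rw [zero_mul] at h1
    refine h1.congr' ?_
    filter_upwards [hL.eventually_gt_atTop 0, hkt.eventually_gt_atTop 0] with n hn hkn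
    simp only [Function.comp, id]
    field_simp
  have hp : Tendsto (fun n : ℕ => c * (Real.log (n : ℝ) / n)) atTop (𝓝 0) := by
    simpa using hLn.const_mul c
  have hx : Tendsto (fun n : ℕ => (half n : ℝ) / n - (k n / Real.log n) * (Real.log n / n))
      atTop (𝓝 (1 / 2)) := by
    simpa using half_div_tendsto.sub (hk.mul hLn)
  have hy : Tendsto (fun n : ℕ => ((half n : ℝ) / n - (k n / Real.log n) * (Real.log n / n)) * c
      / (k n / Real.log n)) atTop (𝓝 (1 / 2 * c / κ)) := (hx.mul_const c).div hk hκ.ne'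
  have hg := ((hk.mul ((hy.log (by positivity)).add_const 1)).sub
    ((half_div_tendsto.mul_const c).div (hp.const_sub 1) (by norm_num))).sub
    ((tendsto_inv_atTop_zero.comp hL).add (hlk.div_const 2))
  have hlim : κ * (Real.log (c / (2 * κ)) + 1) - c / 2 - ε <
      κ * (Real.log (1 / 2 * c / κ) + 1) - 1 / 2 * c / (1 - 0) - (0 + 0 / 2) := by
    have : c / (2 * κ) = 1 / 2 * c / κ := by field_simp
    rw [this]
    linarith
  filter_upwards [hg.eventually_const_lt hlim, hL.eventually_gt_atTop 0,
    hkt.eventually_ge_atTop 1, hp.eventually_lt_const one_pos,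
    hx.eventually_const_lt (by norm_num : (0 : ℝ) < 1 / 2), eventually_gt_atTop 0]
    with n hgn hLpos hk1 hp1 hxn hn
  have hn0 : (0 : ℝ) < n := by exact_mod_cast hn
  have hk0 : (0 : ℝ) < k n := by linarith
  have hpe : min 1 (c * Real.log n / n) = c * (Real.log (n : ℝ) / n) := by
    rw [← mul_div_assoc] at hp1 ⊢
    exact min_eq_right hp1.le
  rw [hpe]
  set p := c * (Real.log (n : ℝ) / n) with hpdef
  have hp0 : 0 < p := by positivity
  have hxe : (half n : ℝ) / n - (k n / Real.log n) * (Real.log n / n)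
      = ((half n : ℝ) - k n) / n := by field_simp
  have hkm : k n < half n := by
    rw [hxe] at hxn
    have := (div_pos_iff_of_pos_right hn0).1 hxn
    have h2 : (k n : ℝ) < half n := by linarith
    exact_mod_cast h2
  have hlow := log_pmf_lower (half n) (k n) p (by exact_mod_cast hk1) hkm hp0 hp1
  have h1p : 0 < 1 - p := by linarith
  have hpos : 0 < ((half n).choose (k n) : ℝ) * (p ^ k n * (1 - p) ^ (half n - k n)) := by
    have := Nat.choose_pos hkm.le
    positivity
  rw [← Real.log_le_log_iff (by positivity) hpos, Real.log_rpow hn0]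
  refine le_trans ?_ hlow
  have hmul := mul_le_mul_of_nonneg_right hgn.le hLpos.le
  refine hmul.trans (le_of_eq ?_)
  have e1 : ((half n : ℝ) / n - (k n / Real.log n) * (Real.log n / n)) * c
      / (k n / Real.log n) = ((half n : ℝ) - k n) * p / k n := by
    rw [hxe, hpdef]; field_simp
  rw [e1]
  simp only [Function.comp, Pi.div_apply, ← hpdef]
  have e2 : (half n : ℝ) * p / (1 - p) = (half n : ℝ) / n * c / (1 - p) * Real.log n := by
    rw [hpdef]; field_simp
  rw [e2]
  field_simp

lemma prob_lower {Ω : Type*} [MeasurableSpace Ω] (P : Measure Ω) [IsProbabilityMeasure P]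
    (m : ℕ) (Z W : Fin m → Ω → ℝ) (hmZ : ∀ k, Measurable (Z k)) (hmW : ∀ k, Measurable (W k))
    (hindep : iIndepFun (Sum.elim Z W) P) (p q : ℝ) (hp : 0 ≤ p) (hp1 : p ≤ 1)
    (hq : 0 ≤ q) (hq1 : q ≤ 1)
    (hZ : ∀ k, P {ω | Z k ω = 1} = ENNReal.ofReal p ∧ P {ω | Z k ω = 0} = 1 - ENNReal.ofReal p)
    (hW : ∀ k, P {ω | W k ω = 1} = ENNReal.ofReal q ∧ P {ω | W k ω = 0} = 1 - ENNReal.ofReal q)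
    (i j : ℕ) (T : ℝ) (hT : T ≤ (i : ℝ) - j) :
    ((m.choose i : ℝ) * (p ^ i * (1 - p) ^ (m - i))) *
      ((m.choose j : ℝ) * (q ^ j * (1 - q) ^ (m - j)))
      ≤ (P {ω | T ≤ (∑ k, Z k ω) - (∑ k, W k ω)}).toReal := by
  classical
  let ind : Finset (Fin m) → Fin m → ℝ := fun A k => if k ∈ A then 1 else 0
  have hind : ∀ A B, ind A = ind B → A = B := by
    intro A B h
    ext k
    have := congrFun h k
    simp only [ind] at this
    by_cases h1 : k ∈ A <;> by_cases h2 : k ∈ B <;> simp_all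
  have hsum : ∀ A, ∑ k, ind A k = (A.card : ℝ) := by
    intro A; simp [ind]
  let E : Finset (Fin m) × Finset (Fin m) → Set Ω := fun AB =>
    ⋂ s : Fin m ⊕ Fin m, (Sum.elim Z W s) ⁻¹' {Sum.elim (ind AB.1) (ind AB.2) s}
  have hE : ∀ AB ω, ω ∈ E AB ↔ (∀ k, Z k ω = ind AB.1 k) ∧ (∀ k, W k ω = ind AB.2 k) := by
    intro AB ω
    simp only [E, Set.mem_iInter, Sum.forall, Sum.elim_inl, Sum.elim_inr, Set.mem_preimage,
      Set.mem_singleton_iff]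
  have hmeas : ∀ s, Measurable (Sum.elim Z W s) := by
    rintro (k | k)
    · exact hmZ k
    · exact hmW k
  have hprod : ∀ (X : Fin m → Ω → ℝ) (r : ℝ), 0 ≤ r → r ≤ 1 →
      (∀ k, P {ω | X k ω = 1} = ENNReal.ofReal r ∧ P {ω | X k ω = 0} = 1 - ENNReal.ofReal r) →
      ∀ A : Finset (Fin m), ∏ k, P (X k ⁻¹' {ind A k})
        = ENNReal.ofReal (r ^ A.card * (1 - r) ^ (m - A.card)) := by
    intro X r hr hr1 hX A
    have h1 : ∀ k, P (X k ⁻¹' {ind A k})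
        = if k ∈ A then ENNReal.ofReal r else ENNReal.ofReal (1 - r) := by
      intro k
      by_cases hk : k ∈ A
      · simp only [ind, hk, if_true]; exact (hX k).1
      · simp only [ind, hk, if_false]
        rw [ENNReal.ofReal_sub 1 hr, ENNReal.ofReal_one]; exact (hX k).2
    simp_rw [h1]
    rw [Finset.prod_ite, Finset.prod_const, Finset.prod_const, ENNReal.ofReal_mul (by positivity),
      ENNReal.ofReal_pow hr, ENNReal.ofReal_pow (by linarith)]
    congr 2
    · simp
    · have : Finset.univ.filter (fun k => k ∉ A) = Aᶜ := by ext; simp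
      rw [this, Finset.card_compl, Fintype.card_fin]
  have hPE : ∀ AB, P (E AB) = ENNReal.ofReal (p ^ AB.1.card * (1 - p) ^ (m - AB.1.card)) *
      ENNReal.ofReal (q ^ AB.2.card * (1 - q) ^ (m - AB.2.card)) := by
    intro AB
    simp only [E]
    rw [hindep.meas_iInter (fun s => ⟨_, measurableSet_singleton _, rfl⟩),
      Fintype.prod_sum_type]
    simp only [Sum.elim_inl, Sum.elim_inr]
    rw [hprod Z p hp hp1 hZ, hprod W q hq hq1 hW]
  let S := Finset.powersetCard i (Finset.univ : Finset (Fin m)) ×ˢ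
    Finset.powersetCard j (Finset.univ : Finset (Fin m))
  have hsub : (⋃ AB ∈ S, E AB) ⊆ {ω | T ≤ (∑ k, Z k ω) - (∑ k, W k ω)} := by
    intro ω hω
    simp only [Set.mem_iUnion] at hω
    obtain ⟨AB, hAB, hω⟩ := hω
    rw [hE] at hω
    simp only [S, Finset.mem_product, Finset.mem_powersetCard] at hAB
    simp only [Set.mem_ofPred_eq, hω.1, hω.2, hsum, hAB.1.2, hAB.2.2]
    exact hT
  have hU : P (⋃ AB ∈ S, E AB) = ∑ AB ∈ S, P (E AB) := by
    refine measure_biUnion_finset ?_ ?_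
    · intro AB _ CD _ hne
      refine Set.disjoint_left.2 fun ω h1 h2 => hne ?_
      rw [hE] at h1 h2
      refine Prod.ext (hind _ _ ?_) (hind _ _ ?_)
      · funext k; rw [← h1.1, ← h2.1]
      · funext k; rw [← h1.2, ← h2.2]
    · intro AB _
      exact MeasurableSet.iInter fun s => hmeas s (measurableSet_singleton _)
  have hconst : ∑ AB ∈ S, P (E AB) = ENNReal.ofReal
      (((m.choose i : ℝ) * (p ^ i * (1 - p) ^ (m - i))) *
      ((m.choose j : ℝ) * (q ^ j * (1 - q) ^ (m - j)))) := by
    have h1p : 0 ≤ 1 - p := by linarith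
    have h1q : 0 ≤ 1 - q := by linarith
    rw [Finset.sum_congr rfl (g := fun _ => ENNReal.ofReal ((p ^ i * (1 - p) ^ (m - i)) *
      (q ^ j * (1 - q) ^ (m - j))))]
    · rw [Finset.sum_const, nsmul_eq_mul, Finset.card_product, Finset.card_powersetCard,
        Finset.card_powersetCard, Finset.card_univ, Fintype.card_fin,
        ← ENNReal.ofReal_natCast, ← ENNReal.ofReal_mul (by positivity)]
      congr 1
      push_cast
      ring
    · intro AB hAB
      simp only [S, Finset.mem_product, Finset.mem_powersetCard] at hAB
      rw [hPE, hAB.1.2, hAB.2.2, ← ENNReal.ofReal_mul (by positivity)]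
  rw [← ENNReal.ofReal_le_iff_le_toReal (measure_ne_top _ _), ← hconst, ← hU]
  exact measure_mono hsub

theorem sbm_llr_lower_bound_no_side_info
    (a b : ℝ) (hb : 0 < b) (hab : b < a)
    (Ω : ℕ → Type*) (mΩ : ∀ n, MeasurableSpace (Ω n))
    (P : ∀ n, Measure (Ω n)) (hP : ∀ n, IsProbabilityMeasure (P n))
    (Z W : ∀ n, Fin (half n) → Ω n → ℝ)
    (hmZ : ∀ n k, Measurable (Z n k)) (hmW : ∀ n k, Measurable (W n k))
    (hindep : ∀ n, 3 ≤ n →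
      iIndepFun (Sum.elim (Z n) (W n)) (P n))
    (hZ : ∀ n, 3 ≤ n → ∀ k,
      P n {ω | Z n k ω = 1} = ENNReal.ofReal (min 1 (b * Real.log n / n)) ∧
      P n {ω | Z n k ω = 0} = 1 - ENNReal.ofReal (min 1 (b * Real.log n / n)))
    (hW : ∀ n, 3 ≤ n → ∀ k,
      P n {ω | W n k ω = 1} = ENNReal.ofReal (min 1 (a * Real.log n / n)) ∧
      P n {ω | W n k ω = 0} = 1 - ENNReal.ofReal (min 1 (a * Real.log n / n))) :
    ∀ ε > (0 : ℝ), ∃ N : ℕ, ∀ n ≥ N,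
      (n : ℝ) ^ (-((Real.sqrt a - Real.sqrt b) ^ 2) / 2 - ε)
        ≤ (P n {ω | 1 + Real.log n / Real.log (Real.log n)
            ≤ (∑ k, Z n k ω) - (∑ k, W n k ω)}).toReal := by
  intro ε hε
  have ha : 0 < a := hb.trans hab
  have hab0 : 0 < Real.sqrt (a * b) := Real.sqrt_pos.2 (by positivity)
  have hL : Tendsto (fun n : ℕ => Real.log (n : ℝ)) atTop atTop :=
    Real.tendsto_log_atTop.comp tendsto_natCast_atTop_atTop
  set κ := Real.sqrt (a * b) / 2 with hκdef
  have hκ : 0 < κ := by positivity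
  let j : ℕ → ℕ := fun n => ⌈κ * Real.log n⌉₊
  let t : ℕ → ℕ := fun n => ⌈1 + Real.log n / Real.log (Real.log n)⌉₊
  have hj : Tendsto (fun n : ℕ => (j n : ℝ) / Real.log n) atTop (nhds κ) :=
    (tendsto_nat_ceil_mul_div_atTop hκ.le).comp hL
  have ht : Tendsto (fun n : ℕ => (t n : ℝ) / Real.log n) atTop (nhds 0) := by
    have hub : Tendsto (fun n : ℕ => 2 * (Real.log (n : ℝ))⁻¹ + (Real.log (Real.log n))⁻¹)
        atTop (nhds 0) := by
      have := ((tendsto_inv_atTop_zero.comp hL).const_mul 2).add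
        (tendsto_inv_atTop_zero.comp (Real.tendsto_log_atTop.comp hL))
      simpa using this
    refine tendsto_of_tendsto_of_tendsto_of_le_of_le' tendsto_const_nhds hub ?_ ?_
    · filter_upwards [hL.eventually_gt_atTop 0] with n hn
      positivity
    · filter_upwards [hL.eventually_gt_atTop 0,
        (Real.tendsto_log_atTop.comp hL).eventually_gt_atTop 0] with n hn hn2
      simp only [Function.comp] at hn2
      have h := (Nat.ceil_lt_add_one (a := 1 + Real.log n / Real.log (Real.log n))
        (by positivity)).le
      have h2 : (t n : ℝ) ≤ 2 + Real.log n / Real.log (Real.log n) := by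
        simp only [t]; linarith
      rw [div_le_iff₀ hn]
      refine h2.trans (le_of_eq ?_)
      field_simp
  have hi : Tendsto (fun n : ℕ => ((j n + t n : ℕ) : ℝ) / Real.log n) atTop (nhds κ) := by
    have := hj.add ht
    rw [add_zero] at this
    refine this.congr fun n => ?_
    push_cast
    ring
  have h1 := pmf_asymp b κ hb hκ (fun n => j n + t n) hi (ε / 2) (by positivity)
  have h2 := pmf_asymp a κ ha hκ j hj (ε / 2) (by positivity)
  obtain ⟨N, hN⟩ := eventually_atTop.1 (h1.and (h2.and (eventually_ge_atTop 3)))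
  refine ⟨N, fun n hn => ?_⟩
  obtain ⟨hB, hA, hn3⟩ := hN n hn
  have hn0 : (0 : ℝ) < n := by
    have : 0 < n := by omega
    exact_mod_cast this
  have hLn : 0 ≤ Real.log (n : ℝ) := Real.log_natCast_nonneg n
  have := hP n
  have key := prob_lower (P n) (half n) (Z n) (W n) (hmZ n) (hmW n) (hindep n hn3)
    (min 1 (b * Real.log n / n)) (min 1 (a * Real.log n / n))
    (le_min zero_le_one (by positivity)) (min_le_left _ _)
    (le_min zero_le_one (by positivity)) (min_le_left _ _)
    (hZ n hn3) (hW n hn3) (j n + t n) (j n) (1 + Real.log n / Real.log (Real.log n))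
    (by push_cast; rw [add_sub_cancel_left]; exact Nat.le_ceil _)
  refine le_trans ?_ key
  refine le_trans (le_of_eq ?_) (mul_le_mul hB hA (by positivity) (le_trans (by positivity) hB))
  rw [← Real.rpow_add hn0]
  congr 1
  have hlog : Real.log (b / (2 * κ)) + Real.log (a / (2 * κ)) = 0 := by
    rw [← Real.log_mul (by positivity) (by positivity)]
    have : b / (2 * κ) * (a / (2 * κ)) = 1 := by
      have h : (2 * κ) * (2 * κ) = a * b := by
        rw [hκdef, mul_div_cancel₀ _ (two_ne_zero)]
        exact Real.mul_self_sqrt (by positivity)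
      rw [div_mul_div_comm, h, mul_comm b a]
      exact div_self (by positivity)
    rw [this, Real.log_one]
  have hsq : (Real.sqrt a - Real.sqrt b) ^ 2 = a + b - 4 * κ := by
    rw [hκdef, Real.sqrt_mul ha.le]
    have e1 := Real.sq_sqrt ha.le
    have e2 := Real.sq_sqrt hb.le
    linear_combination e1 + e2
  rw [hsq]
  linear_combination (-κ) * hlog
end

section
/- Fix reals a > b > 0, set T = log(a/b), and fix β with 0 < β < T·(a−b)/2; set γ = √(β² + a·b·T²) and η(a,b,β) = a + b + β − 2γ/T + (β/T)·log((γ+β)/(γ−β)). For each integer n ≥ 3, let Z₁, …, Z_{⌈n/2⌉} be i.i.d. Bernoulli with success probability min(1, b·log n/n) and W₁, …, W_{⌈n/2⌉} be i.i.d. Bernoulli with success probability min(1, a·log n/n), all mutually independent. Then for every ε > 0 there exists N such that for all n ≥ N, P( Σ_{k=1}^{⌈n/2⌉} (Z_k − W_k) ≥ (β/T)·log n ) ≤ n^{−η(a,b,β)/2 + ε}. -/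
open MeasureTheory ProbabilityTheory Filter

lemma bern_aux {Ω : Type*} {mΩ : MeasurableSpace Ω} (μ : Measure Ω) [IsProbabilityMeasure μ]
    (X : Ω → ℝ) (hX : Measurable X) (p : ℝ) (hp0 : 0 ≤ p) (hp1 : p ≤ 1)
    (h1 : μ {ω | X ω = 1} = ENNReal.ofReal p)
    (h0 : μ {ω | X ω = 0} = 1 - ENNReal.ofReal p) (s : ℝ) :
    Integrable (fun ω => Real.exp (s * X ω)) μ ∧
      mgf X μ s ≤ Real.exp (p * (Real.exp s - 1)) := by
  have hm1 : MeasurableSet {ω | X ω = 1} := hX (measurableSet_singleton 1)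
  have hm0 : MeasurableSet {ω | X ω = 0} := hX (measurableSet_singleton 0)
  have hdisj : Disjoint {ω | X ω = 1} {ω | X ω = 0} := by
    rw [Set.disjoint_left]
    intro ω h h'
    simp only [Set.mem_setOf_eq] at h h'
    rw [h] at h'
    norm_num at h'
  have hU : μ ({ω | X ω = 1} ∪ {ω | X ω = 0}) = 1 := by
    rw [measure_union hdisj hm0, h1, h0]
    apply add_tsub_cancel_of_le
    rw [← ENNReal.ofReal_one]
    exact ENNReal.ofReal_le_ofReal hp1
  have hae : ∀ᵐ ω ∂μ, ω ∈ ({ω | X ω = 1} ∪ {ω | X ω = 0}) :=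
    (prob_compl_eq_zero_iff (hm1.union hm0)).2 hU
  have heq : (fun ω => Real.exp (s * X ω)) =ᵐ[μ]
      fun ω => 1 + ({ω | X ω = 1}).indicator (fun _ => Real.exp s - 1) ω := by
    filter_upwards [hae] with ω h
    rcases h with h | h
    · rw [Set.indicator_of_mem h]
      simp only [Set.mem_setOf_eq] at h
      rw [h]; simp
    · have h' : ω ∉ {ω | X ω = 1} := fun h2 => Set.disjoint_left.1 hdisj h2 h
      rw [Set.indicator_of_notMem h']
      simp only [Set.mem_setOf_eq] at h
      rw [h]; simp
  have hi : Integrable (({ω | X ω = 1}).indicator (fun _ : Ω => Real.exp s - 1)) μ :=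
    (integrable_const _).indicator hm1
  refine ⟨((integrable_const (1:ℝ)).add hi).congr heq.symm, ?_⟩
  have : mgf X μ s = 1 + p * (Real.exp s - 1) := by
    unfold mgf
    rw [integral_congr_ae heq, integral_add (integrable_const _) hi,
      integral_indicator_const _ hm1]
    simp [measureReal_def, h1, ENNReal.toReal_ofReal hp0]
  rw [this]
  linarith [Real.add_one_le_exp (p * (Real.exp s - 1))]

lemma chernoff_aux {Ω : Type*} {mΩ : MeasurableSpace Ω} (μ : Measure Ω) [IsProbabilityMeasure μ]
    (m : ℕ) (Z W : Fin m → Ω → ℝ) (hmZ : ∀ k, Measurable (Z k)) (hmW : ∀ k, Measurable (W k))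
    (hind : iIndepFun (Sum.elim Z W) μ) (p q : ℝ) (hp0 : 0 ≤ p) (hp1 : p ≤ 1)
    (hq0 : 0 ≤ q) (hq1 : q ≤ 1)
    (hZ : ∀ k, μ {ω | Z k ω = 1} = ENNReal.ofReal p ∧ μ {ω | Z k ω = 0} = 1 - ENNReal.ofReal p)
    (hW : ∀ k, μ {ω | W k ω = 1} = ENNReal.ofReal q ∧ μ {ω | W k ω = 0} = 1 - ENNReal.ofReal q)
    (t : ℝ) (ht : 0 ≤ t) (x : ℝ) :
    (μ {ω | x ≤ ∑ k, (Z k ω - W k ω)}).toReal ≤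
      Real.exp (-t * x + m * (p * (Real.exp t - 1) + q * (Real.exp (-t) - 1))) := by
  let g : Fin m ⊕ Fin m → ℝ → ℝ := Sum.elim (fun _ y => y) (fun _ y => -y)
  let Y : Fin m ⊕ Fin m → Ω → ℝ := fun i => g i ∘ (Sum.elim Z W i)
  have hg : ∀ i, Measurable (g i) := by
    rintro (i | i)
    · exact measurable_id
    · exact measurable_neg
  have hYm : ∀ i, Measurable (Y i) := by
    rintro (i | i)
    · exact (hg _).comp (hmZ i)
    · exact (hg _).comp (hmW i)
  have hY : iIndepFun Y μ := hind.comp g hg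
  have hYl : ∀ k, Y (Sum.inl k) = Z k := fun k => rfl
  have hYr : ∀ k, Y (Sum.inr k) = -W k := fun k => rfl
  have hZb := fun k => bern_aux μ (Z k) (hmZ k) p hp0 hp1 (hZ k).1 (hZ k).2 t
  have hWb := fun k => bern_aux μ (W k) (hmW k) q hq0 hq1 (hW k).1 (hW k).2 (-t)
  have hint : Integrable (fun ω => Real.exp (t * (∑ i, Y i) ω)) μ := by
    apply hY.integrable_exp_mul_sum hYm
    rintro (i | i) _
    · exact (hZb i).1
    · have := (hWb i).1
      simpa [hYr] using this
  have hc := measure_ge_le_exp_mul_mgf (X := ∑ i, Y i) (μ := μ) x ht hint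
  have hset : {ω | x ≤ ∑ k, (Z k ω - W k ω)} = {ω | x ≤ (∑ i, Y i) ω} := by
    ext ω
    simp [hYl, hYr, Finset.sum_sub_distrib, sub_eq_add_neg, Finset.sum_add_distrib]
  rw [hset]
  refine hc.trans ?_
  rw [hY.mgf_sum hYm, Real.exp_add, mul_add, Real.exp_add, Fintype.prod_sum_type]
  refine mul_le_mul_of_nonneg_left ?_ (Real.exp_pos _).le
  have e1 : ∏ k, mgf (Y (Sum.inl k)) μ t ≤ Real.exp (m * (p * (Real.exp t - 1))) := by
    calc _ ≤ ∏ k : Fin m, Real.exp (p * (Real.exp t - 1)) :=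
          Finset.prod_le_prod (fun _ _ => mgf_nonneg) (fun k _ => (hZb k).2)
      _ = _ := by simp [Real.exp_nat_mul]
  have e2 : ∏ k, mgf (Y (Sum.inr k)) μ t ≤ Real.exp (m * (q * (Real.exp (-t) - 1))) := by
    calc _ ≤ ∏ k : Fin m, Real.exp (q * (Real.exp (-t) - 1)) :=
          Finset.prod_le_prod (fun _ _ => mgf_nonneg) (fun k _ => by
            rw [hYr, mgf_neg]; exact (hWb k).2)
      _ = _ := by simp [Real.exp_nat_mul]
  exact mul_le_mul e1 e2 (Finset.prod_nonneg fun _ _ => mgf_nonneg) (Real.exp_pos _).le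

/-- The optimal Chernoff parameter. -/
lemma opt_aux (a b β T γ : ℝ) (hb : 0 < b) (hab : b < a) (hβ : 0 < β)
    (hT : T = Real.log (a / b)) (hγ : γ = Real.sqrt (β ^ 2 + a * b * T ^ 2)) :
    ∃ t : ℝ, 0 ≤ t ∧ (b * (Real.exp t - 1) + a * (Real.exp (-t) - 1)) / 2 - t * (β / T) =
      -(a + b + β - 2 * γ / T + (β / T) * Real.log ((γ + β) / (γ - β))) / 2 := by
  have ha : 0 < a := hb.trans hab
  have hTpos : 0 < T := by
    rw [hT]; exact Real.log_pos ((one_lt_div hb).2 hab)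
  have hsq : γ ^ 2 = β ^ 2 + a * b * T ^ 2 := by
    rw [hγ]; exact Real.sq_sqrt (by positivity)
  have hγ0 : 0 ≤ γ := by rw [hγ]; exact Real.sqrt_nonneg _
  have habT : 0 < a * b * T ^ 2 := by positivity
  have hγβ : β < γ := by nlinarith
  have hd : 0 < γ - β := by linarith
  have hs : 0 < γ + β := by linarith
  have hpr : (γ - β) * (γ + β) = a * b * T ^ 2 := by linarith [hsq, sq_sub_sq γ β]
  have hquot : 0 < (γ + β) / (b * T) := by positivity
  refine ⟨Real.log ((γ + β) / (b * T)), ?_, ?_⟩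
  · apply Real.log_nonneg
    rw [le_div_iff₀ (by positivity), one_mul]
    have : b * T ≤ γ := by
      rw [hγ]; apply Real.le_sqrt_of_sq_le
      have : b * b * T ^ 2 ≤ a * b * T ^ 2 := by gcongr
      nlinarith [sq_nonneg β]
    linarith
  · have h2 : 2 * Real.log ((γ + β) / (b * T)) = Real.log ((γ + β) / (γ - β)) + T := by
      nth_rewrite 2 [hT]
      rw [← Real.log_mul (by positivity) (by positivity)]
      rw [← Nat.cast_ofNat (R := ℝ) (n := 2), ← Real.log_pow]
      congr 1
      rw [div_pow, div_mul_div_comm, div_eq_div_iff (by positivity) (by positivity)]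
      linear_combination (γ + β) * b * hpr
    rw [Real.exp_neg, Real.exp_log hquot]
    have h4 : ((γ + β) / (b * T))⁻¹ = (γ - β) / (a * T) := by
      field_simp
      linear_combination - hpr
    rw [h4]
    have h5 : Real.log ((γ + β) / (b * T)) = (Real.log ((γ + β) / (γ - β)) + T) / 2 := by linarith
    rw [h5]
    field_simp
    ring

theorem sbm_llr_upper_bound_noisy_side_info
    (a b : ℝ) (hb : 0 < b) (hab : b < a)
    (β : ℝ) (hβ : 0 < β) (hβ2 : β < Real.log (a / b) * (a - b) / 2)
    (Ω : ℕ → Type*) (mΩ : ∀ n, MeasurableSpace (Ω n))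
    (P : ∀ n, Measure (Ω n)) (hP : ∀ n, IsProbabilityMeasure (P n))
    (Z W : ∀ n, Fin (half n) → Ω n → ℝ)
    (hmZ : ∀ n k, Measurable (Z n k)) (hmW : ∀ n k, Measurable (W n k))
    (hindep : ∀ n, 3 ≤ n →
      iIndepFun (Sum.elim (Z n) (W n)) (P n))
    (hZ : ∀ n, 3 ≤ n → ∀ k,
      P n {ω | Z n k ω = 1} = ENNReal.ofReal (min 1 (b * Real.log n / n)) ∧
      P n {ω | Z n k ω = 0} = 1 - ENNReal.ofReal (min 1 (b * Real.log n / n)))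
    (hW : ∀ n, 3 ≤ n → ∀ k,
      P n {ω | W n k ω = 1} = ENNReal.ofReal (min 1 (a * Real.log n / n)) ∧
      P n {ω | W n k ω = 0} = 1 - ENNReal.ofReal (min 1 (a * Real.log n / n))) :
    let T : ℝ := Real.log (a / b)
    let γ : ℝ := Real.sqrt (β ^ 2 + a * b * T ^ 2)
    let η : ℝ := a + b + β - 2 * γ / T + (β / T) * Real.log ((γ + β) / (γ - β))
    ∀ ε > (0 : ℝ), ∃ N : ℕ, ∀ n ≥ N,
      (P n {ω | (β / T) * Real.log n ≤ ∑ k, (Z n k ω - W n k ω)}).toReal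
        ≤ (n : ℝ) ^ (-η / 2 + ε) := by
  intro T γ η ε hε
  have ha : 0 < a := hb.trans hab
  obtain ⟨t, ht, hopt⟩ := opt_aux a b β T γ hb hab hβ rfl rfl
  set D : ℝ := b * (Real.exp t - 1) + a * (Real.exp (-t) - 1) with hD
  have hlim : Tendsto (fun n : ℕ => a * Real.log n / n) atTop (nhds 0) := by
    have h := (Real.isLittleO_log_id_atTop.tendsto_div_nhds_zero).comp tendsto_natCast_atTop_atTop
    have h2 := h.const_mul a
    simp only [mul_zero] at h2
    refine h2.congr fun n => ?_
    simp [mul_div_assoc]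
  have hev : ∀ᶠ n : ℕ in atTop, a * Real.log n / n ≤ 1 :=
    (hlim.eventually_lt_const one_pos).mono fun _ h => h.le
  have hev2 : ∀ᶠ n : ℕ in atTop, |D| / ε ≤ n :=
    tendsto_natCast_atTop_atTop.eventually_ge_atTop _
  obtain ⟨N, hN⟩ := eventually_atTop.1 ((hev.and hev2).and (eventually_ge_atTop 3))
  refine ⟨N, fun n hn => ?_⟩
  obtain ⟨⟨h1, h2⟩, h3⟩ := hN n hn
  have hn0 : (0 : ℝ) < n := by positivity
  have hL : 0 ≤ Real.log n := Real.log_natCast_nonneg n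
  have h1b : b * Real.log n / n ≤ 1 := le_trans (by gcongr) h1
  haveI := hP n
  have hZn := hZ n h3
  have hWn := hW n h3
  rw [min_eq_right h1b] at hZn
  rw [min_eq_right h1] at hWn
  have hc := chernoff_aux (P n) (half n) (Z n) (W n) (hmZ n) (hmW n) (hindep n h3)
    (b * Real.log n / n) (a * Real.log n / n) (by positivity) h1b (by positivity) h1 hZn hWn t ht
    (β / T * Real.log n)
  refine hc.trans ?_
  rw [Real.rpow_def_of_pos hn0, Real.exp_le_exp]
  have hm1 : (n : ℝ) / 2 ≤ half n := Nat.le_ceil _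
  have hm2 : (half n : ℝ) ≤ n / 2 + 1 := (Nat.ceil_lt_add_one (by positivity)).le
  have hkey : ((half n : ℝ) / n - 1 / 2) * D ≤ ε := by
    have e0 : 0 ≤ (half n : ℝ) / n - 1 / 2 := by
      rw [sub_nonneg, le_div_iff₀ hn0]; linarith
    have e1 : (half n : ℝ) / n - 1 / 2 ≤ 1 / n := by
      rw [sub_le_iff_le_add, div_le_iff₀ hn0]
      have : (1 / (n : ℝ) + 1 / 2) * n = n / 2 + 1 := by field_simp; ring
      linarith
    calc _ ≤ ((half n : ℝ) / n - 1 / 2) * |D| := mul_le_mul_of_nonneg_left (le_abs_self D) e0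
      _ ≤ 1 / n * |D| := mul_le_mul_of_nonneg_right e1 (abs_nonneg D)
      _ ≤ ε := by
        rw [div_le_iff₀ hε] at h2
        rw [one_div_mul_eq_div, div_le_iff₀ hn0]
        linarith
  have hrw : -t * (β / T * Real.log n) + (half n : ℝ) * (b * Real.log n / n * (Real.exp t - 1)
      + a * Real.log n / n * (Real.exp (-t) - 1)) =
      Real.log n * ((D / 2 - t * (β / T)) + ((half n : ℝ) / n - 1 / 2) * D) := by
    rw [hD]; ring
  rw [hrw, hopt]
  exact mul_le_mul_of_nonneg_left (by simp only [η]; linarith) hL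
end
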